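/- arXiv:1808.09985 — 2 statements merged into one kernel-verified Lean document; each statement's English description precedes it below -/
import Mathlib

section
/- Let s ↦ P(s), s ∈ [0,1], be a continuously differentiable family of orthogonal projections on a finite-dimensional complex Hilbert space, and let s ↦ U(s) solve the Kato equation U̇(s) = [Ṗ(s), P(s)] U(s) with U(0) = 1. Then U(s) is unitary for every s and the flow intertwines the projections: U(s) P(0) U(s)* = P(s) for all s ∈ [0,1]. -/
/-!
If `X` obeys the Lax equation `Ẋ = [G, X]` with `G` skew-adjoint and `U̇ = G U`, then `U⋆ X U` has
zero derivative. Taking `X = 1` shows that `U⋆ U` is constant. Differentiating `P² = P` gives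
`Ṗ P + P Ṗ = Ṗ`, hence `P Ṗ P = 0`, so that `[[Ṗ, P], P] = Ṗ`: the family `P` itself obeys the Lax
equation of Kato's generator `[Ṗ, P]`, and `U⋆ P U` is constant.

For `U U⋆ = 1`, note that `1 - U U⋆` is a continuous family of idempotents. A nonzero idempotent has
norm at least `1`, so such a family vanishes identically once it vanishes at one point.
-/

section Algebra

variable {R : Type*} [NonUnitalRing R] {p d : R}

theorem mul_mul_self_eq_zero_of_isIdempotentElem (hp : IsIdempotentElem p)
    (hd : d * p + p * d = d) : p * d * p = 0 := by
  have hdouble : p * d * p + p * d * p = p * d * p :=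
    calc p * d * p + p * d * p
        = p * d * (p * p) + p * p * d * p := by rw [hp.eq]
      _ = p * (d * p + p * d) * p := by noncomm_ring
      _ = p * d * p := by rw [hd]
  exact add_eq_left.mp hdouble

theorem lie_lie_self_of_isIdempotentElem (hp : IsIdempotentElem p)
    (hd : d * p + p * d = d) : ⁅⁅d, p⁆, p⁆ = d :=
  calc ⁅⁅d, p⁆, p⁆
      = d * (p * p) + p * p * d - (p * d * p + p * d * p) := by
        simp only [Ring.lie_def]; noncomm_ring
    _ = d := by
      rw [hp.eq, hd, mul_mul_self_eq_zero_of_isIdempotentElem hp hd, add_zero, sub_zero]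

theorem lie_mem_skewAdjoint_of_isSelfAdjoint [StarRing R] (hd : IsSelfAdjoint d)
    (hp : IsSelfAdjoint p) : ⁅d, p⁆ ∈ skewAdjoint R := by
  rw [skewAdjoint.mem_iff, Ring.lie_def, star_sub, star_mul, star_mul, hd.star_eq, hp.star_eq,
    neg_sub]

end Algebra

section Idempotents

variable {A : Type*} [NonUnitalNormedRing A]

theorem one_le_norm_of_isIdempotentElem {p : A} (hp : IsIdempotentElem p) (hp0 : p ≠ 0) :
    1 ≤ ‖p‖ := by
  have hsq : 1 * ‖p‖ ≤ ‖p‖ * ‖p‖ := by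
    simpa only [hp.eq, one_mul] using norm_mul_le p p
  exact le_of_mul_le_mul_right hsq (norm_pos_iff.mpr hp0)

theorem eq_zero_of_isPreconnected_of_isIdempotentElem {X : Type*} [TopologicalSpace X] {S : Set X}
    {p : X → A} {x y : X} (hS : IsPreconnected S) (hcont : ContinuousOn p S)
    (hp : ∀ z ∈ S, IsIdempotentElem (p z)) (hx : x ∈ S) (hpx : p x = 0) (hy : y ∈ S) :
    p y = 0 := by
  by_contra hpy
  have hmem : (1 / 2 : ℝ) ∈ Set.Icc ‖p x‖ ‖p y‖ := by
    have := one_le_norm_of_isIdempotentElem (hp y hy) hpy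
    constructor
    · simp [hpx]
    · linarith
  obtain ⟨z, hz, hpz : ‖p z‖ = 1 / 2⟩ := hS.intermediate_value hx hy hcont.norm hmem
  have hpz0 : p z ≠ 0 := norm_pos_iff.mp (by rw [hpz]; norm_num)
  linarith [one_le_norm_of_isIdempotentElem (hp z hz) hpz0]

end Idempotents

theorem eq_of_hasDerivWithinAt_zero {E : Type*} [NormedAddCommGroup E] [NormedSpace ℝ E]
    {S : Set ℝ} {f : ℝ → E} {s t : ℝ} (hS : Convex ℝ S)
    (hf : ∀ r ∈ S, HasDerivWithinAt f 0 S r) (hs : s ∈ S) (ht : t ∈ S) : f s = f t := by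
  have hle : ‖f s - f t‖ ≤ 0 * ‖s - t‖ :=
    hS.norm_image_sub_le_of_norm_hasDerivWithin_le hf (fun _ _ ↦ norm_zero.le) ht hs
  rwa [zero_mul, norm_le_zero_iff, sub_eq_zero] at hle

section UniqueDiffWithinAt

variable {𝕜 : Type*} [NontriviallyNormedField 𝕜] {S : Set 𝕜} {s : 𝕜}

theorem mul_add_mul_eq_of_hasDerivWithinAt_of_isIdempotentElem {A : Type*} [NormedRing A]
    [NormedAlgebra 𝕜 A] {P : 𝕜 → A} {P' : A} (hS : UniqueDiffWithinAt 𝕜 S s) (hs : s ∈ S)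
    (hP : ∀ t ∈ S, IsIdempotentElem (P t)) (hP' : HasDerivWithinAt P P' S s) :
    P' * P s + P s * P' = P' :=
  have hsq : HasDerivWithinAt P (P' * P s + P s * P') S s :=
    (hP'.mul hP').congr (fun t ht ↦ (hP t ht).eq.symm) (hP s hs).eq.symm
  hS.eq_deriv _ hsq hP'

theorem isSelfAdjoint_of_hasDerivWithinAt [StarRing 𝕜] [TrivialStar 𝕜] {E : Type*}
    [NormedAddCommGroup E] [NormedSpace 𝕜 E] [StarAddMonoid E] [StarModule 𝕜 E]
    [ContinuousStar E] {f : 𝕜 → E} {f' : E} (hS : UniqueDiffWithinAt 𝕜 S s) (hs : s ∈ S)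
    (hf : ∀ t ∈ S, IsSelfAdjoint (f t)) (hf' : HasDerivWithinAt f f' S s) : IsSelfAdjoint f' :=
  have hstar : HasDerivWithinAt f (star f') S s :=
    hf'.star.congr (fun t ht ↦ (hf t ht).star_eq.symm) (hf s hs).star_eq.symm
  hS.eq_deriv _ hstar hf'

end UniqueDiffWithinAt

section StarDeriv

variable {A : Type*} [NormedRing A] [NormedAlgebra ℝ A] [StarRing A] [ContinuousStar A]
  [StarModule ℝ A] {S : Set ℝ} {U G : ℝ → A} {s t : ℝ}

theorem star_mul_mul_eq_of_hasDerivWithinAt_lie {X : ℝ → A} (hS : Convex ℝ S)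
    (hG : ∀ r ∈ S, G r ∈ skewAdjoint A)
    (hU : ∀ r ∈ S, HasDerivWithinAt U (G r * U r) S r)
    (hX : ∀ r ∈ S, HasDerivWithinAt X ⁅G r, X r⁆ S r) (hs : s ∈ S) (ht : t ∈ S) :
    star (U s) * X s * U s = star (U t) * X t * U t := by
  refine eq_of_hasDerivWithinAt_zero (f := fun r ↦ star (U r) * X r * U r) hS
    (fun r hr ↦ ?_) hs ht
  refine (((hU r hr).star.mul (hX r hr)).mul (hU r hr)).congr_deriv ?_
  rw [Pi.mul_apply, star_mul, skewAdjoint.mem_iff.mp (hG r hr), Ring.lie_def]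
  noncomm_ring

theorem mem_unitary_of_hasDerivWithinAt_skewAdjoint_mul (hS : Convex ℝ S)
    (hG : ∀ r ∈ S, G r ∈ skewAdjoint A)
    (hU : ∀ r ∈ S, HasDerivWithinAt U (G r * U r) S r) (ht : t ∈ S) (hUt : U t ∈ unitary A)
    (hs : s ∈ S) : U s ∈ unitary A := by
  have hleft : ∀ r ∈ S, star (U r) * U r = 1 := fun r hr ↦ by
    have hone : ∀ q ∈ S, HasDerivWithinAt (fun _ ↦ (1 : A)) ⁅G q, (1 : A)⁆ S q := fun q _ ↦
      (hasDerivWithinAt_const q S 1).congr_deriv (by simp [Ring.lie_def])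
    simpa only [mul_one, Unitary.star_mul_self_of_mem hUt] using
      star_mul_mul_eq_of_hasDerivWithinAt_lie hS hG hU hone hr ht
  have hidem : ∀ r ∈ S, IsIdempotentElem (1 - U r * star (U r)) := fun r hr ↦
    IsIdempotentElem.one_sub <|
      calc U r * star (U r) * (U r * star (U r))
          = U r * (star (U r) * U r) * star (U r) := by noncomm_ring
        _ = U r * star (U r) := by rw [hleft r hr, mul_one]
  have hUcont : ContinuousOn U S := fun r hr ↦ (hU r hr).continuousWithinAt
  have hright : 1 - U s * star (U s) = 0 :=
    eq_zero_of_isPreconnected_of_isIdempotentElem (p := fun r ↦ 1 - U r * star (U r))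
      hS.isPreconnected (continuousOn_const.sub (hUcont.mul hUcont.star)) hidem ht
      (by rw [Unitary.mul_star_self_of_mem hUt, sub_self]) hs
  exact Unitary.mem_iff.mpr ⟨hleft s hs, (sub_eq_zero.mp hright).symm⟩

theorem stmt_3_general {P P' : ℝ → A} (hS : Convex ℝ S) (hSd : UniqueDiffOn ℝ S)
    (hP : ∀ r ∈ S, IsStarProjection (P r)) (hP' : ∀ r ∈ S, HasDerivWithinAt P (P' r) S r)
    (hU : ∀ r ∈ S, HasDerivWithinAt U (⁅P' r, P r⁆ * U r) S r) (ht : t ∈ S) (hUt : U t = 1)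
    (hs : s ∈ S) : U s ∈ unitary A ∧ U s * P t * star (U s) = P s := by
  have hskew : ∀ r ∈ S, ⁅P' r, P r⁆ ∈ skewAdjoint A := fun r hr ↦
    lie_mem_skewAdjoint_of_isSelfAdjoint
      (isSelfAdjoint_of_hasDerivWithinAt (hSd r hr) hr (fun q hq ↦ (hP q hq).isSelfAdjoint)
        (hP' r hr))
      (hP r hr).isSelfAdjoint
  have hLax : ∀ r ∈ S, HasDerivWithinAt P ⁅⁅P' r, P r⁆, P r⁆ S r := fun r hr ↦
    (hP' r hr).congr_deriv <| .symm <|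
      lie_lie_self_of_isIdempotentElem (hP r hr).isIdempotentElem <|
        mul_add_mul_eq_of_hasDerivWithinAt_of_isIdempotentElem (hSd r hr) hr
          (fun q hq ↦ (hP q hq).isIdempotentElem) (hP' r hr)
  have hunitary : U s ∈ unitary A :=
    mem_unitary_of_hasDerivWithinAt_skewAdjoint_mul hS hskew hU ht (hUt ▸ one_mem _) hs
  have hpull : star (U s) * P s * U s = P t := by
    simpa only [hUt, star_one, one_mul, mul_one] using
      star_mul_mul_eq_of_hasDerivWithinAt_lie hS hskew hU hLax hs ht
  refine ⟨hunitary, ?_⟩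
  calc U s * P t * star (U s)
      = (U s * star (U s)) * P s * (U s * star (U s)) := by rw [← hpull]; noncomm_ring
    _ = P s := by rw [Unitary.mul_star_self_of_mem hunitary, one_mul, mul_one]

end StarDeriv

/-- Kato's parallel transport: if `s ↦ P s`, `s ∈ [0,1]`, is a continuously differentiable
family of orthogonal projections and `U` solves `U̇ = [Ṗ, P] U`, `U 0 = 1`, then each
`U s` is unitary and `U s * P 0 * (U s)⋆ = P s`. -/
theorem stmt_3 {𝓗 : Type*} [NormedAddCommGroup 𝓗] [InnerProductSpace ℂ 𝓗]
    [FiniteDimensional ℂ 𝓗]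
    (P P' U U' : ℝ → 𝓗 →L[ℂ] 𝓗)
    (hPderiv : ∀ s ∈ Set.Icc (0:ℝ) 1, HasDerivWithinAt P (P' s) (Set.Icc 0 1) s)
    (hP'cont : ContinuousOn P' (Set.Icc 0 1))
    (hidem : ∀ s ∈ Set.Icc (0:ℝ) 1, P s * P s = P s)
    (hsa : ∀ s ∈ Set.Icc (0:ℝ) 1, IsSelfAdjoint (P s))
    (hUderiv : ∀ s ∈ Set.Icc (0:ℝ) 1, HasDerivWithinAt U (U' s) (Set.Icc 0 1) s)
    (hKato : ∀ s ∈ Set.Icc (0:ℝ) 1, U' s = (P' s * P s - P s * P' s) * U s)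
    (hU0 : U 0 = 1) :
    ∀ s ∈ Set.Icc (0:ℝ) 1,
      (U s * star (U s) = 1 ∧ star (U s) * U s = 1) ∧
      U s * P 0 * star (U s) = P s := by
  intro s hs
  obtain ⟨hunitary, htransport⟩ := stmt_3_general (convex_Icc 0 1) uniqueDiffOn_Icc_zero_one
    (fun r hr ↦ ⟨hidem r hr, hsa r hr⟩) hPderiv
    (fun r hr ↦ (hUderiv r hr).congr_deriv (hKato r hr)) (Set.left_mem_Icc.mpr zero_le_one) hU0 hs
  exact ⟨(Unitary.mem_iff.mp hunitary).symm, htransport⟩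
end

section
/- Let s ↦ H(s), s ∈ [0,1], be a twice continuously differentiable family of Hermitian operators on a finite-dimensional complex Hilbert space such that for every s the spectrum of H(s) decomposes as Σ(s) ∪ Σ'(s) with Σ(s) ⊂ [a,b] and dist(Σ'(s), [a,b]) ≥ γ > 0, and let P(s) be the spectral projection of H(s) onto Σ(s). Assume Ḣ(0) = Ḣ(1) = 0. Then there exists a constant C (depending on the family H and on γ but not on ε) such that for every ε ∈ (0,1] and every differentiable solution ρ : [0,1] → operators of the driven equation ε ρ̇(s) = −i[H(s), ρ(s)] with ρ(0) = P(0), one has ‖ρ(1) − P(1)‖ ≤ C ε. -/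
/-!
Write `R(ζ) = (ζ - H)⁻¹` and let the contour enclose `[a, b]` inside the gap. As `P` is idempotent,
`Ṗ = [P, [P, Ṗ]]`, and hence `B = (2πi)⁻¹ ∮ R [P, Ṗ] R dζ` solves `[H, B] = Ṗ`. Since `P` commutes
with `H`, the operator `D = ρ - P - iεB` then satisfies the driven equation up to the source `-iεḂ`:
the two terms of order one cancel. The flow `Ẋ = -(i/ε)[H, X]` is isometric, however small `ε` is,
so `‖D‖`, and with it `‖ρ - P‖`, is of order `ε`.
-/

open Set Filter MeasureTheory
open scoped Topology

section Evolution

variable {A : Type*} [CStarAlgebra A]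

theorem norm_exp_mul_mul_exp_neg_of_mem_skewAdjoint {y : A} (hy : y ∈ skewAdjoint A) (x : A) :
    ‖NormedSpace.exp y * x * NormedSpace.exp (-y)‖ = ‖x‖ := by
  let +nondep : NormedAlgebra ℚ A := .restrictScalars ℚ ℂ A
  rw [CStarRing.norm_mul_mem_unitary _
      (NormedSpace.exp_mem_unitary_of_mem_skewAdjoint (neg_mem hy)),
    CStarRing.norm_mem_unitary_mul _ (NormedSpace.exp_mem_unitary_of_mem_skewAdjoint hy)]

theorem hasDerivAt_exp_smul_mul_mul_exp_neg_smul {R : Type*} [NormedRing R] [NormedAlgebra ℝ R]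
    [CompleteSpace R] (y x : R) :
    HasDerivAt (fun t : ℝ => NormedSpace.exp (t • y) * x * NormedSpace.exp (-(t • y)))
      ⁅y, x⁆ 0 := by
  have hexp (w : R) : HasDerivAt (fun t : ℝ => NormedSpace.exp (t • w)) w 0 := by
    simpa using hasDerivAt_exp_smul_const (𝕂 := ℝ) w 0
  simpa [Ring.lie_def, sub_eq_add_neg] using ((hexp y).mul_const x).fun_mul (hexp (-y))

theorem norm_le_add_mul_of_hasDerivWithinAt_lie_add {t₀ t₁ M : ℝ} {D Y E : ℝ → A}
    (hY : ∀ s ∈ Ico t₀ t₁, Y s ∈ skewAdjoint A)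
    (hD : ∀ s ∈ Icc t₀ t₁, HasDerivWithinAt D (⁅Y s, D s⁆ + E s) (Icc t₀ t₁) s)
    (hE : ∀ s ∈ Ico t₀ t₁, ‖E s‖ ≤ M) {t : ℝ} (ht : t ∈ Icc t₀ t₁) :
    ‖D t‖ ≤ ‖D t₀‖ + M * (t - t₀) := by
  refine image_le_of_liminf_slope_right_le_deriv_boundary (f := fun s => ‖D s‖)
    (B := fun s => ‖D t₀‖ + M * (s - t₀)) (B' := fun _ => M)
    (fun s hs => (hD s hs).continuousWithinAt.norm) (by simp) (by fun_prop)
    (fun x _ => by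
      simpa using
        ((((hasDerivAt_id x).sub_const t₀).const_mul M).const_add ‖D t₀‖).hasDerivWithinAt)
    (fun x hx r hr => ?_) ht
  -- To first order at `x`, `D` is the isometric flow `G` of the frozen generator `Y x` plus the
  -- contribution of the source, so only `E x` can make the norm grow.
  let G : ℝ → A := fun z =>
    NormedSpace.exp ((z - x) • Y x) * D x * NormedSpace.exp (-((z - x) • Y x))
  have norm_G (z : ℝ) : ‖G z‖ = ‖D x‖ :=
    norm_exp_mul_mul_exp_neg_of_mem_skewAdjoint (skewAdjoint.smul_mem _ (hY x hx)) _
  have G_self : G x = D x := by simp [G]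
  have hasDerivAt_G : HasDerivAt G ⁅Y x, D x⁆ x :=
    HasDerivAt.comp_sub_const x x (by
      simpa using hasDerivAt_exp_smul_mul_mul_exp_neg_smul (Y x) (D x))
  have hasDerivWithinAt_sub : HasDerivWithinAt (fun z => D z - G z) (E x) (Ioi x) x := by
    simpa using ((hD x (Ico_subset_Icc_self hx)).mono_of_mem_nhdsWithin
      (Icc_mem_nhdsGT_of_mem hx)).fun_sub hasDerivAt_G.hasDerivWithinAt
  have slope_lt : ∀ᶠ z in 𝓝[>] x, ‖slope (fun z => D z - G z) x z‖ < r :=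
    ((hasDerivWithinAt_iff_tendsto_slope' self_notMem_Ioi).1
      hasDerivWithinAt_sub).norm.eventually_lt_const ((hE x hx).trans_lt hr)
  apply Eventually.frequently
  filter_upwards [slope_lt, self_mem_nhdsWithin] with z hz hxz
  have hzx : 0 < z - x := sub_pos.2 hxz
  calc slope (fun s => ‖D s‖) x z = (z - x)⁻¹ * (‖D z‖ - ‖G z‖) := by
        rw [slope_def_field, norm_G, div_eq_inv_mul]
    _ ≤ (z - x)⁻¹ * ‖D z - G z‖ := by gcongr; exact norm_sub_norm_le _ _
    _ = ‖slope (fun z => D z - G z) x z‖ := by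
        rw [slope_def_module, G_self, sub_self, sub_zero, norm_smul, norm_inv,
          Real.norm_of_nonneg hzx.le]
    _ < r := hz

theorem smul_lie_sub_sub_smul {𝕜 R : Type*} [CommRing 𝕜] [Ring R] [Algebra 𝕜 R] {c d : 𝕜}
    (hcd : c * d = 1) {h p : R} (hhp : Commute h p) (x b : R) :
    ⁅c • h, x - p - d • b⁆ = c • ⁅h, x⁆ - ⁅h, b⁆ := by
  have smul_lie (y : R) : ⁅c • h, y⁆ = c • ⁅h, y⁆ := by
    simp only [Ring.lie_def, smul_mul_assoc, mul_smul_comm, smul_sub]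
  have lie_expand : ⁅h, x - p - d • b⁆ = ⁅h, x⁆ - (h * p - p * h) - d • ⁅h, b⁆ := by
    simp only [Ring.lie_def, mul_sub, sub_mul, smul_mul_assoc, mul_smul_comm, smul_sub]
    abel
  rw [smul_lie, lie_expand, hhp.eq, sub_self, sub_zero, smul_sub, smul_smul, hcd, one_smul]

theorem norm_sub_le_mul_of_lie_eq_deriv {t₀ t₁ ε M : ℝ} (hε : 0 < ε)
    {H P P' B B' ρ ρ' : ℝ → A} (hsa : ∀ s ∈ Ico t₀ t₁, IsSelfAdjoint (H s))
    (hP : ∀ s ∈ Icc t₀ t₁, HasDerivWithinAt P (P' s) (Icc t₀ t₁) s)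
    (hB : ∀ s ∈ Icc t₀ t₁, HasDerivWithinAt B (B' s) (Icc t₀ t₁) s)
    (hB' : ∀ s ∈ Ico t₀ t₁, ‖B' s‖ ≤ M) (hHP : ∀ s ∈ Icc t₀ t₁, Commute (H s) (P s))
    (hHB : ∀ s ∈ Icc t₀ t₁, ⁅H s, B s⁆ = P' s)
    (hρ : ∀ s ∈ Icc t₀ t₁, HasDerivWithinAt ρ (ρ' s) (Icc t₀ t₁) s)
    (hode : ∀ s ∈ Icc t₀ t₁, ε • ρ' s = -Complex.I • ⁅H s, ρ s⁆) (h₀ : ρ t₀ = P t₀)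
    {t : ℝ} (ht : t ∈ Icc t₀ t₁) :
    ‖ρ t - P t‖ ≤ ε * (‖B t₀‖ + M * (t - t₀) + ‖B t‖) := by
  have ε_ne : (ε : ℂ) ≠ 0 := mod_cast hε.ne'
  have norm_coeff (x : A) : ‖(ε * Complex.I : ℂ) • x‖ = ε * ‖x‖ := by
    simp [norm_smul, abs_of_pos hε]
  let D : ℝ → A := fun s => ρ s - P s - (ε * Complex.I : ℂ) • B s
  let Y : ℝ → A := fun s => ((ε : ℂ)⁻¹ * -Complex.I) • H s
  let E : ℝ → A := fun s => -((ε * Complex.I : ℂ) • B' s)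
  have Y_skew (s) (hs : s ∈ Ico t₀ t₁) : Y s ∈ skewAdjoint A :=
    (hsa s hs).smul_mem_skewAdjoint (by simp [skewAdjoint.mem_iff])
  have lie_eq (s) (hs : s ∈ Icc t₀ t₁) : ⁅Y s, D s⁆ = ρ' s - P' s := by
    have hρ' : ((ε : ℂ)⁻¹ * -Complex.I) • ⁅H s, ρ s⁆ = ρ' s := by
      rw [mul_smul, ← hode s hs, ← Complex.coe_smul, inv_smul_smul₀ ε_ne]
    rw [smul_lie_sub_sub_smul _ (hHP s hs), hρ', hHB s hs]
    rw [mul_mul_mul_comm, inv_mul_cancel₀ ε_ne, neg_mul, Complex.I_mul_I, neg_neg, one_mul]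
  have hasDerivWithinAt_D (s) (hs : s ∈ Icc t₀ t₁) :
      HasDerivWithinAt D (⁅Y s, D s⁆ + E s) (Icc t₀ t₁) s := by
    rw [lie_eq s hs, ← sub_eq_add_neg]
    exact ((hρ s hs).fun_sub (hP s hs)).fun_sub ((hB s hs).fun_const_smul _)
  have norm_D_le : ‖D t‖ ≤ ‖D t₀‖ + ε * M * (t - t₀) :=
    norm_le_add_mul_of_hasDerivWithinAt_lie_add Y_skew hasDerivWithinAt_D (fun s hs => by
      simpa only [E, norm_neg, norm_coeff] using mul_le_mul_of_nonneg_left (hB' s hs) hε.le) ht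
  calc ‖ρ t - P t‖ = ‖D t + (ε * Complex.I : ℂ) • B t‖ := by simp [D]
    _ ≤ ‖D t‖ + ε * ‖B t‖ := (norm_add_le _ _).trans_eq (by rw [norm_coeff])
    _ ≤ ε * ‖B t₀‖ + ε * M * (t - t₀) + ε * ‖B t‖ := by
        gcongr
        simpa [D, h₀, norm_coeff] using norm_D_le
    _ = ε * (‖B t₀‖ + M * (t - t₀) + ‖B t‖) := by ring

theorem exists_norm_sub_le_mul_of_lie_eq_derivWithin {t₀ t₁ : ℝ} (ht : t₀ < t₁) {H P B : ℝ → A}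
    (hsa : ∀ s ∈ Icc t₀ t₁, IsSelfAdjoint (H s)) (hP : DifferentiableOn ℝ P (Icc t₀ t₁))
    (hB : ContDiffOn ℝ 1 B (Icc t₀ t₁)) (hHP : ∀ s ∈ Icc t₀ t₁, Commute (H s) (P s))
    (hHB : ∀ s ∈ Icc t₀ t₁, ⁅H s, B s⁆ = derivWithin P (Icc t₀ t₁) s) :
    ∃ C : ℝ, ∀ ε > (0 : ℝ), ∀ ρ ρ' : ℝ → A,
      (∀ s ∈ Icc t₀ t₁, HasDerivWithinAt ρ (ρ' s) (Icc t₀ t₁) s) →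
      (∀ s ∈ Icc t₀ t₁, ε • ρ' s = -Complex.I • ⁅H s, ρ s⁆) →
      ρ t₀ = P t₀ → ∀ t ∈ Icc t₀ t₁, ‖ρ t - P t‖ ≤ C * ε := by
  obtain ⟨K, hK⟩ := isCompact_Icc.exists_bound_of_continuousOn hB.continuousOn
  obtain ⟨M, hM⟩ := isCompact_Icc.exists_bound_of_continuousOn
    (hB.continuousOn_derivWithin (uniqueDiffOn_Icc ht) le_rfl)
  have t₀_mem : t₀ ∈ Icc t₀ t₁ := left_mem_Icc.2 ht.le
  have M_nonneg : 0 ≤ M := (norm_nonneg _).trans (hM t₀ t₀_mem)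
  refine ⟨K + M * (t₁ - t₀) + K, fun ε hε ρ ρ' hρ hode h₀ t htI => ?_⟩
  calc ‖ρ t - P t‖ ≤ ε * (‖B t₀‖ + M * (t - t₀) + ‖B t‖) :=
        norm_sub_le_mul_of_lie_eq_deriv hε (fun s hs => hsa s (Ico_subset_Icc_self hs))
          (fun s hs => (hP s hs).hasDerivWithinAt)
          (fun s hs => (hB.differentiableOn one_ne_zero s hs).hasDerivWithinAt)
          (fun s hs => hM s (Ico_subset_Icc_self hs)) hHP hHB hρ hode h₀ htI
    _ ≤ ε * (K + M * (t₁ - t₀) + K) := by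
        gcongr
        exacts [hK t₀ t₀_mem, htI.2, hK t htI]
    _ = (K + M * (t₁ - t₀) + K) * ε := mul_comm _ _

end Evolution

section Commutator

theorem lie_lie_eq_of_isIdempotentElem {R : Type*} [Ring R] {p p' : R} (hp : IsIdempotentElem p)
    (hp' : p' * p + p * p' = p') : ⁅p, ⁅p, p'⁆⁆ = p' := by
  have corner : p * p' * p = 0 := by
    have : p * p' * p + p * p' * p = p * p' * p := by
      calc p * p' * p + p * p' * p = p * (p' * p + p * p') * p := by
            simp only [mul_add, add_mul, mul_assoc, hp.eq, hp.mul_self_mul]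
        _ = p * p' * p := by rw [hp']
    simpa using this
  calc ⁅p, ⁅p, p'⁆⁆ = p * p * p' + p' * (p * p) - 2 • (p * p' * p) := by
        simp only [Ring.lie_def]; noncomm_ring
    _ = p' := by rw [hp.eq, corner, smul_zero, sub_zero, add_comm, hp']

theorem derivWithin_mul_add_mul_derivWithin_of_isIdempotentElem {R : Type*} [NormedRing R]
    [NormedAlgebra ℝ R] {P : ℝ → R} {s : Set ℝ} (hP : DifferentiableOn ℝ P s)
    (hidem : ∀ t ∈ s, IsIdempotentElem (P t)) (hs : UniqueDiffOn ℝ s) {t : ℝ} (ht : t ∈ s) :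
    derivWithin P s t * P t + P t * derivWithin P s t = derivWithin P s t := by
  have hPP := (hP t ht).hasDerivWithinAt.fun_mul (hP t ht).hasDerivWithinAt
  rw [← hPP.derivWithin (hs t ht)]
  exact derivWithin_congr (fun u hu => hidem u hu) (hidem t ht)

end Commutator

section Resolvent

variable {K A : Type*} [TopologicalSpace K] [NormedRing A] [NormedAlgebra ℂ A]

/-- The resolvents `k ↦ (z k - h)⁻¹` along a continuous family `z` of points off the spectrum of
`h`, as a single element of `C(K, A)`: for compact `K` this is a Banach algebra, so that smooth
dependence on `h` is an instance of the smoothness of inversion. If some `z k` lies in the spectrum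
of `h`, the junk value is `0`. -/
noncomputable def resolventMap (z : C(K, ℂ)) (h : A) : C(K, A) :=
  Ring.inverse (z • (1 : C(K, A)) - ContinuousMap.const K h)

variable [CompleteSpace A] {z : C(K, ℂ)} {h : A}

theorem isUnit_smul_one_sub_const (hz : ∀ k, z k ∉ spectrum ℂ h) :
    IsUnit (z • (1 : C(K, A)) - ContinuousMap.const K h) := by
  rw [ContinuousMap.isUnit_iff_forall_isUnit]
  intro k
  simpa [Algebra.algebraMap_eq_smul_one] using spectrum.notMem_iff.1 (hz k)

theorem resolventMap_apply (hz : ∀ k, z k ∉ spectrum ℂ h) (k : K) :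
    resolventMap z h k = resolvent h (z k) := by
  refine left_inv_eq_right_inv (a := algebraMap ℂ A (z k) - h) ?_
    (Ring.mul_inverse_cancel _ (spectrum.notMem_iff.1 (hz k)))
  simpa [resolventMap, Algebra.algebraMap_eq_smul_one] using
    DFunLike.congr_fun (Ring.inverse_mul_cancel _ (isUnit_smul_one_sub_const hz)) k

theorem const_mul_resolventMap (hz : ∀ k, z k ∉ spectrum ℂ h) :
    ContinuousMap.const K h * resolventMap z h = z • resolventMap z h - 1 := by
  rw [← Ring.mul_inverse_cancel _ (isUnit_smul_one_sub_const hz), sub_mul, resolventMap]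
  ext k
  simp

theorem resolventMap_mul_const (hz : ∀ k, z k ∉ spectrum ℂ h) :
    resolventMap z h * ContinuousMap.const K h = z • resolventMap z h - 1 := by
  rw [← Ring.inverse_mul_cancel _ (isUnit_smul_one_sub_const hz), mul_sub, resolventMap]
  ext k
  simp

theorem lie_const_resolventMap_mul_const_mul_resolventMap (hz : ∀ k, z k ∉ spectrum ℂ h) (x : A) :
    ⁅ContinuousMap.const K h, resolventMap z h * ContinuousMap.const K x * resolventMap z h⁆ =
      ⁅resolventMap z h, ContinuousMap.const K x⁆ := by
  simp only [Ring.lie_def]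
  calc ContinuousMap.const K h * (resolventMap z h * ContinuousMap.const K x * resolventMap z h) -
        resolventMap z h * ContinuousMap.const K x * resolventMap z h * ContinuousMap.const K h
      = ContinuousMap.const K h * resolventMap z h * ContinuousMap.const K x * resolventMap z h -
        resolventMap z h * ContinuousMap.const K x *
          (resolventMap z h * ContinuousMap.const K h) := by simp only [mul_assoc]
    _ = resolventMap z h * ContinuousMap.const K x -
        ContinuousMap.const K x * resolventMap z h := by
        rw [const_mul_resolventMap hz, resolventMap_mul_const hz]
        ext k
        simp [sub_mul, mul_sub, mul_assoc]

theorem contDiffOn_resolventMap [CompactSpace K] {n : WithTop ℕ∞} {H : ℝ → A} {s : Set ℝ}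
    (hH : ContDiffOn ℝ n H s) (hz : ∀ t ∈ s, ∀ k, z k ∉ spectrum ℂ (H t)) :
    ContDiffOn ℝ n (fun t => resolventMap z (H t)) s := by
  intro t ht
  obtain ⟨u, hu⟩ := isUnit_smul_one_sub_const (hz t ht)
  have hconst : ContDiffWithinAt ℝ n (fun t => ContinuousMap.const K (H t)) s t :=
    (hH t ht).continuousLinearMap_comp (ContinuousLinearMap.const ℝ K : A →L[ℝ] C(K, A))
  have hinv := contDiffAt_ringInverse ℝ (n := n) u
  rw [hu] at hinv
  exact hinv.comp_contDiffWithinAt t (contDiffWithinAt_const.sub hconst)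

end Resolvent

section WeightedIntegral

variable {K A : Type*} [TopologicalSpace K] [CompactSpace K] [MeasurableSpace K] [BorelSpace K]
  [NormedRing A] [NormedAlgebra ℂ A] (μ : Measure K) [IsFiniteMeasure μ] (w : C(K, ℂ))

theorem integrable_smul_continuousMap (f : C(K, A)) : Integrable (fun k => w k • f k) μ :=
  (w • f).continuous.integrable_of_hasCompactSupport (.of_compactSpace _)

/-- The integral `f ↦ ∫ w k • f k ∂μ` as a continuous linear map on `C(K, A)`. A contour integral
is of this form, with `w` the derivative of the parametrisation up to a constant. -/
noncomputable def weightedIntegral : C(K, A) →L[ℝ] A :=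
  LinearMap.mkContinuous
    { toFun := fun f => ∫ k, w k • f k ∂μ
      map_add' := fun f g => by
        simpa using integral_add (integrable_smul_continuousMap μ w f)
          (integrable_smul_continuousMap μ w g)
      map_smul' := fun c f => by
        simpa [smul_comm _ c] using integral_smul c _ }
    (‖w‖ * μ.real univ) fun f => by
      refine (norm_integral_le_of_norm_le_const (C := ‖w‖ * ‖f‖) (.of_forall fun k => ?_)).trans_eq
        (by ring)
      rw [norm_smul]
      gcongr
      exacts [w.norm_coe_le_norm k, f.norm_coe_le_norm k]

theorem weightedIntegral_apply (f : C(K, A)) : weightedIntegral μ w f = ∫ k, w k • f k ∂μ := rfl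

theorem weightedIntegral_const_mul (x : A) (f : C(K, A)) :
    weightedIntegral μ w (ContinuousMap.const K x * f) = x * weightedIntegral μ w f := by
  simpa [weightedIntegral_apply] using
    integral_const_mul_of_integrable (integrable_smul_continuousMap μ w f) (c := x)

theorem weightedIntegral_mul_const (x : A) (f : C(K, A)) :
    weightedIntegral μ w (f * ContinuousMap.const K x) = weightedIntegral μ w f * x := by
  simpa [weightedIntegral_apply] using
    integral_mul_const_of_integrable (integrable_smul_continuousMap μ w f) (c := x)

/-- For a contour parametrised by `z` with `w = z' / (2πi)`, the operator
`(2πi)⁻¹ ∮ (ζ - h)⁻¹ x (ζ - h)⁻¹ dζ`: it solves `⁅h, ·⁆ = ⁅p, x⁆`, where `p` is the Riesz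
projection of `h` for this contour. -/
noncomputable def rieszTwist (z : C(K, ℂ)) (h x : A) : A :=
  weightedIntegral μ w (resolventMap z h * ContinuousMap.const K x * resolventMap z h)

variable {μ w} [CompleteSpace A]

theorem lie_rieszTwist {z : C(K, ℂ)} {h : A} (hz : ∀ k, z k ∉ spectrum ℂ h) (x : A) :
    ⁅h, rieszTwist μ w z h x⁆ = ⁅weightedIntegral μ w (resolventMap z h), x⁆ := by
  rw [rieszTwist, Ring.lie_def, ← weightedIntegral_const_mul, ← weightedIntegral_mul_const,
    ← map_sub, ← Ring.lie_def, lie_const_resolventMap_mul_const_mul_resolventMap hz, Ring.lie_def,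
    map_sub, weightedIntegral_const_mul, weightedIntegral_mul_const, Ring.lie_def]

theorem contDiffOn_rieszTwist {z : C(K, ℂ)} {n : WithTop ℕ∞} {H X : ℝ → A} {s : Set ℝ}
    (hH : ContDiffOn ℝ n H s) (hX : ContDiffOn ℝ n X s)
    (hz : ∀ t ∈ s, ∀ k, z k ∉ spectrum ℂ (H t)) :
    ContDiffOn ℝ n (fun t => rieszTwist μ w z (H t) (X t)) s :=
  have hR := contDiffOn_resolventMap hH hz
  have hconst : ContDiffOn ℝ n (fun t => ContinuousMap.const K (X t)) s :=
    hX.continuousLinearMap_comp (ContinuousLinearMap.const ℝ K : A →L[ℝ] C(K, A))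
  ((hR.mul hconst).mul hR).continuousLinearMap_comp (weightedIntegral μ w : C(K, A) →L[ℝ] A)

theorem exists_contDiffOn_lie_eq_derivWithin {z : C(K, ℂ)} {n : WithTop ℕ∞} {H P : ℝ → A}
    {s : Set ℝ} (hs : UniqueDiffOn ℝ s) (hH : ContDiffOn ℝ (n + 1) H s)
    (hz : ∀ t ∈ s, ∀ k, z k ∉ spectrum ℂ (H t))
    (hP : ∀ t ∈ s, P t = weightedIntegral μ w (resolventMap z (H t)))
    (hidem : ∀ t ∈ s, IsIdempotentElem (P t)) :
    ContDiffOn ℝ (n + 1) P s ∧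
      ∃ B : ℝ → A, ContDiffOn ℝ n B s ∧ ∀ t ∈ s, ⁅H t, B t⁆ = derivWithin P s t := by
  have hPdiff : ContDiffOn ℝ (n + 1) P s :=
    ((contDiffOn_resolventMap hH hz).continuousLinearMap_comp
      (weightedIntegral μ w : C(K, A) →L[ℝ] A)).congr hP
  have hP' : ContDiffOn ℝ n (derivWithin P s) s := hPdiff.derivWithin hs le_rfl
  have hPn : ContDiffOn ℝ n P s := hPdiff.of_le le_self_add
  refine ⟨hPdiff, fun t => rieszTwist μ w z (H t) ⁅P t, derivWithin P s t⁆,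
    contDiffOn_rieszTwist (hH.of_le le_self_add) ((hPn.mul hP').sub (hP'.mul hPn)) hz,
    fun t ht => ?_⟩
  rw [lie_rieszTwist (hz t ht), ← hP t ht, lie_lie_eq_of_isIdempotentElem (hidem t ht)]
  exact derivWithin_mul_add_mul_derivWithin_of_isIdempotentElem
    (hPdiff.differentiableOn (by simp)) hidem hs ht

end WeightedIntegral

section SpectralCalculus

variable {A : Type*} [CStarAlgebra A] {h : A}

theorem resolvent_eq_cfc (hh : IsStarNormal h) {ζ : ℂ} (hζ : ζ ∉ spectrum ℂ h) :
    resolvent h ζ = cfc (fun x : ℂ => (ζ - x)⁻¹) h := by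
  have hne : ∀ x ∈ spectrum ℂ h, ζ - x ≠ 0 := fun x hx h0 => hζ (sub_eq_zero.1 h0 ▸ hx)
  rw [cfc_inv (fun x : ℂ => ζ - x) h hne, cfc_sub (fun _ => ζ) (fun x => x) h, cfc_const ζ h,
    cfc_id' ℂ h, resolvent]

theorem weightedIntegral_resolventMap_eq_cfc {K : Type*} [TopologicalSpace K] [CompactSpace K]
    [MeasurableSpace K] [BorelSpace K] {μ : Measure K} [IsFiniteMeasure μ] {w z : C(K, ℂ)}
    (hh : IsStarNormal h) (hz : ∀ k, z k ∉ spectrum ℂ h) :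
    weightedIntegral μ w (resolventMap z h) =
      cfc (fun x : ℂ => ∫ k, w k * (z k - x)⁻¹ ∂μ) h := by
  have hne : ∀ k, ∀ x ∈ spectrum ℂ h, z k - x ≠ 0 := fun k x hx h0 =>
    hz k (sub_eq_zero.1 h0 ▸ hx)
  have hcont : ContinuousOn (Function.uncurry fun (k : K) (x : ℂ) => w k * (z k - x)⁻¹)
      (univ ×ˢ spectrum ℂ h) :=
    ContinuousOn.mul (by fun_prop) (ContinuousOn.inv₀ (by fun_prop) fun q hq => hne q.1 q.2 hq.2)
  obtain ⟨C, hC⟩ :=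
    (isCompact_univ.prod (spectrum.isCompact (𝕜 := ℂ) h)).exists_bound_of_continuousOn hcont
  rw [cfc_integral (fun k x => w k * (z k - x)⁻¹) (fun _ => C) h hcont
    (.of_forall fun k x hx => hC (k, x) ⟨mem_univ k, hx⟩) (hasFiniteIntegral_const C)]
  refine integral_congr_ae (.of_forall fun k => ?_)
  have hcont_inv : ContinuousOn (fun x : ℂ => (z k - x)⁻¹) (spectrum ℂ h) :=
    ContinuousOn.inv₀ (by fun_prop) (hne k)
  simp only [resolventMap_apply hz, resolvent_eq_cfc hh (hz k)]
  exact (cfc_const_mul (w k) (fun x : ℂ => (z k - x)⁻¹) h hcont_inv).symm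

theorem isIdempotentElem_cfc_indicator_one (h : A) (S : Set ℝ) :
    IsIdempotentElem (cfc (S.indicator fun _ => (1 : ℝ)) h) := by
  by_cases hS : ContinuousOn (S.indicator fun _ => (1 : ℝ)) (spectrum ℝ h)
  · rw [IsIdempotentElem, ← cfc_mul _ _ h]
    congr 1
    ext x
    by_cases hx : x ∈ S <;> simp [hx]
  · rw [cfc_apply_of_not_continuousOn h hS]
    exact .zero

end SpectralCalculus

section RieszProjection

theorem fact_zero_lt_two_mul_pi : Fact (0 < 2 * Real.pi) := ⟨Real.two_pi_pos⟩

attribute [local instance] fact_zero_lt_two_mul_pi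

/-- The circle of centre `c` and radius `r`, as a loop on the compact group `ℝ / 2πℤ`. -/
noncomputable def circleLoop (c : ℂ) (r : ℝ) : C(AddCircle (2 * Real.pi), ℂ) where
  toFun := (periodic_circleMap c r).lift
  continuous_toFun := continuous_coinduced_dom.2 (continuous_circleMap c r)

theorem circleLoop_coe (c : ℂ) (r θ : ℝ) : circleLoop c r θ = circleMap c r θ := rfl

theorem integral_haarAddCircle_circleLoop {E : Type*} [NormedAddCommGroup E] [NormedSpace ℝ E]
    (f : ℂ → E) (c : ℂ) (r : ℝ) :
    ∫ θ, f (circleLoop c r θ) ∂AddCircle.haarAddCircle = Real.circleAverage f c r := by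
  rw [AddCircle.integral_haarAddCircle, Real.circleAverage,
    ← AddCircle.intervalIntegral_preimage (2 * Real.pi) 0, zero_add]
  rfl

theorem circleAverage_div_sub_of_mem_ball {c x : ℂ} {r : ℝ} (hx : x ∈ Metric.ball c |r|) :
    Real.circleAverage (fun ζ => (ζ - c) / (ζ - x)) c r = 1 := by
  simpa using (diffContOnCl_const (c := (1 : ℂ))).circleAverage_smul_div hx

theorem circleAverage_div_sub_of_notMem_closedBall {c x : ℂ} {r : ℝ}
    (hx : x ∉ Metric.closedBall c |r|) :
    Real.circleAverage (fun ζ => (ζ - c) / (ζ - x)) c r = 0 := by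
  have hne : ∀ ζ ∈ Metric.closedBall c |r|, ζ - x ≠ 0 := fun ζ hζ h0 =>
    hx (sub_eq_zero.1 h0 ▸ hζ)
  have hdiff : DifferentiableOn ℂ (fun ζ => (ζ - c) / (ζ - x)) (Metric.closedBall c |r|) :=
    DifferentiableOn.div (by fun_prop) (by fun_prop) hne
  simpa using (hdiff.diffContOnCl_ball subset_rfl).circleAverage

variable {A : Type*} [CStarAlgebra A] {h : A}

theorem circleLoop_notMem_spectrum (hsa : IsSelfAdjoint h) {c r : ℝ} (hr : 0 ≤ r)
    (hspec : ∀ x ∈ spectrum ℝ h, |x - c| ≠ r) (θ : AddCircle (2 * Real.pi)) :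
    circleLoop c r θ ∉ spectrum ℂ h := by
  induction θ using QuotientAddGroup.induction_on with | H θ
  intro hmem
  refine hspec _ (hsa.spectrumRestricts.apply_mem hmem) ?_
  have hre := hsa.mem_spectrum_eq_re hmem
  have hdist := circleMap_mem_sphere (c : ℂ) hr θ
  rwa [← circleLoop_coe, hre, mem_sphere_iff_norm, ← Complex.ofReal_sub, Complex.norm_real] at hdist

/-- The weight is `ζ - c` because `dζ / (2πi) = (ζ - c) dθ / (2π)` on the circle. -/
theorem weightedIntegral_resolventMap_circleLoop_eq_cfc_indicator (hsa : IsSelfAdjoint h) {c r : ℝ}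
    (hr : 0 ≤ r) (hne : ∀ x ∈ spectrum ℝ h, |x - c| ≠ r) {S : Set ℝ}
    (hS : ∀ x ∈ spectrum ℝ h, x ∈ S ↔ |x - c| < r) :
    weightedIntegral AddCircle.haarAddCircle (circleLoop c r - ContinuousMap.const _ (c : ℂ))
        (resolventMap (circleLoop c r) h) =
      cfc (S.indicator fun _ => (1 : ℝ)) h := by
  rw [weightedIntegral_resolventMap_eq_cfc hsa.isStarNormal (circleLoop_notMem_spectrum hsa hr hne),
    cfc_real_eq_complex _ hsa]
  refine cfc_congr fun x hx => ?_
  have hx' : x.re ∈ spectrum ℝ h := hsa.spectrumRestricts.apply_mem hx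
  have hdist : dist x c = |x.re - c| := by
    rw [hsa.mem_spectrum_eq_re hx, Complex.dist_eq, ← Complex.ofReal_sub, Complex.norm_real,
      Complex.ofReal_re, Real.norm_eq_abs]
  refine (integral_haarAddCircle_circleLoop (fun ζ => (ζ - c) * (ζ - x)⁻¹) c r).trans ?_
  simp only [← div_eq_mul_inv]
  by_cases hxS : x.re ∈ S
  · rw [indicator_of_mem hxS, Complex.ofReal_one]
    apply circleAverage_div_sub_of_mem_ball
    rw [Metric.mem_ball, hdist, abs_of_nonneg hr]
    exact (hS _ hx').1 hxS
  · rw [indicator_of_notMem hxS, Complex.ofReal_zero]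
    apply circleAverage_div_sub_of_notMem_closedBall
    rw [Metric.mem_closedBall, hdist, abs_of_nonneg hr, not_le]
    exact (not_lt.1 (mt (hS _ hx').2 hxS)).lt_of_ne' (hne _ hx')

theorem exists_contDiffOn_lie_eq_derivWithin_of_eq_cfc_indicator {n : WithTop ℕ∞} {H P : ℝ → A}
    {S : ℝ → Set ℝ} {s : Set ℝ} {c r : ℝ} (hs : UniqueDiffOn ℝ s)
    (hsa : ∀ t ∈ s, IsSelfAdjoint (H t)) (hH : ContDiffOn ℝ (n + 1) H s) (hr : 0 ≤ r)
    (hne : ∀ t ∈ s, ∀ x ∈ spectrum ℝ (H t), |x - c| ≠ r)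
    (hS : ∀ t ∈ s, ∀ x ∈ spectrum ℝ (H t), x ∈ S t ↔ |x - c| < r)
    (hP : ∀ t ∈ s, P t = cfc ((S t).indicator fun _ => (1 : ℝ)) (H t)) :
    ContDiffOn ℝ (n + 1) P s ∧
      ∃ B : ℝ → A, ContDiffOn ℝ n B s ∧ ∀ t ∈ s, ⁅H t, B t⁆ = derivWithin P s t := by
  have riesz (t) (ht : t ∈ s) : P t = weightedIntegral AddCircle.haarAddCircle
      (circleLoop c r - ContinuousMap.const _ (c : ℂ)) (resolventMap (circleLoop c r) (H t)) := by
    rw [hP t ht, weightedIntegral_resolventMap_circleLoop_eq_cfc_indicator (hsa t ht) hr (hne t ht)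
      (hS t ht)]
  exact exists_contDiffOn_lie_eq_derivWithin hs hH
    (fun t ht => circleLoop_notMem_spectrum (hsa t ht) hr (hne t ht)) riesz
    (fun t ht => hP t ht ▸ isIdempotentElem_cfc_indicator_one (H t) (S t))

end RieszProjection

theorem abs_sub_midpoint_le_half_sub {a b x : ℝ} (hx : x ∈ Icc a b) :
    |x - (a + b) / 2| ≤ (b - a) / 2 := by
  rw [abs_le]
  constructor <;> linarith [hx.1, hx.2]

theorem half_sub_add_le_abs_sub_midpoint {a b γ x : ℝ} (hab : a ≤ b) (hγ : 0 < γ)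
    (hgap : ∀ y ∈ Icc a b, γ ≤ |x - y|) : (b - a) / 2 + γ ≤ |x - (a + b) / 2| := by
  rcases lt_or_ge x a with hxa | hax
  · have := hgap a (left_mem_Icc.2 hab)
    rw [abs_of_neg (by linarith)] at this ⊢
    linarith
  rcases lt_or_ge b x with hbx | hxb
  · have := hgap b (right_mem_Icc.2 hab)
    rw [abs_of_pos (by linarith)] at this ⊢
    linarith
  · exact absurd (hgap x ⟨hax, hxb⟩) (by simpa using hγ)

theorem contDiffOn_two_of_hasDerivWithinAt {E : Type*} [NormedAddCommGroup E] [NormedSpace ℝ E]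
    {f f' f'' : ℝ → E} {s : Set ℝ} (hs : UniqueDiffOn ℝ s)
    (hf : ∀ t ∈ s, HasDerivWithinAt f (f' t) s t)
    (hf' : ∀ t ∈ s, HasDerivWithinAt f' (f'' t) s t) (hf'' : ContinuousOn f'' s) :
    ContDiffOn ℝ 2 f s := by
  have hf'_contDiffOn : ContDiffOn ℝ 1 f' s :=
    contDiffOn_one_iff_derivWithin hs |>.2 ⟨fun t ht => (hf' t ht).differentiableWithinAt,
      hf''.congr fun t ht => (hf' t ht).derivWithin (hs t ht)⟩
  rw [← one_add_one_eq_two, contDiffOn_succ_iff_derivWithin hs]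
  exact ⟨fun t ht => (hf t ht).differentiableWithinAt, by simp,
    hf'_contDiffOn.congr fun t ht => (hf t ht).derivWithin (hs t ht)⟩

theorem stmt_16_general {A : Type*} [CStarAlgebra A] {t₀ t₁ a b γ : ℝ} (ht : t₀ < t₁)
    (hab : a ≤ b) (hγ : 0 < γ) {H P : ℝ → A} {S S' : ℝ → Set ℝ}
    (hsa : ∀ s ∈ Icc t₀ t₁, IsSelfAdjoint (H s)) (hH : ContDiffOn ℝ 2 H (Icc t₀ t₁))
    (hspec : ∀ s ∈ Icc t₀ t₁, spectrum ℝ (H s) = S s ∪ S' s)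
    (hS : ∀ s ∈ Icc t₀ t₁, S s ⊆ Icc a b)
    (hgap : ∀ s ∈ Icc t₀ t₁, ∀ x ∈ S' s, ∀ y ∈ Icc a b, γ ≤ |x - y|)
    (hP : ∀ s ∈ Icc t₀ t₁, P s = cfc ((S s).indicator fun _ => (1 : ℝ)) (H s)) :
    ∃ C : ℝ, ∀ ε > (0 : ℝ), ∀ ρ ρ' : ℝ → A,
      (∀ s ∈ Icc t₀ t₁, HasDerivWithinAt ρ (ρ' s) (Icc t₀ t₁) s) →
      (∀ s ∈ Icc t₀ t₁, ε • ρ' s = -Complex.I • ⁅H s, ρ s⁆) →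
      ρ t₀ = P t₀ → ∀ t ∈ Icc t₀ t₁, ‖ρ t - P t‖ ≤ C * ε := by
  let c := (a + b) / 2
  let r := (b - a) / 2 + γ / 2
  have r_nonneg : 0 ≤ r := by dsimp only [r]; linarith
  have inside (s) (hs : s ∈ Icc t₀ t₁) (x) (hx : x ∈ S s) : |x - c| < r := by
    have := abs_sub_midpoint_le_half_sub (hS s hs hx)
    dsimp only [c, r]; linarith
  have outside (s) (hs : s ∈ Icc t₀ t₁) (x) (hx : x ∈ S' s) : r < |x - c| := by
    have := half_sub_add_le_abs_sub_midpoint hab hγ (hgap s hs x hx)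
    dsimp only [c, r]; linarith
  have split (s) (hs : s ∈ Icc t₀ t₁) (x) (hx : x ∈ spectrum ℝ (H s)) : x ∈ S s ∨ x ∈ S' s :=
    (hspec s hs).subset hx
  have off_circle (s) (hs : s ∈ Icc t₀ t₁) (x) (hx : x ∈ spectrum ℝ (H s)) : |x - c| ≠ r :=
    (split s hs x hx).elim (fun h => (inside s hs x h).ne) fun h => (outside s hs x h).ne'
  have mem_iff (s) (hs : s ∈ Icc t₀ t₁) (x) (hx : x ∈ spectrum ℝ (H s)) :
      x ∈ S s ↔ |x - c| < r :=
    ⟨inside s hs x, fun h => (split s hs x hx).resolve_right fun h' =>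
      h.not_gt (outside s hs x h')⟩
  have commute (s) (hs : s ∈ Icc t₀ t₁) : Commute (H s) (P s) := by
    rw [hP s hs]
    exact ((Commute.refl _).cfc_real _).symm
  obtain ⟨contDiff_P, B, contDiff_B, lie_B⟩ :=
    exists_contDiffOn_lie_eq_derivWithin_of_eq_cfc_indicator (n := 1) (uniqueDiffOn_Icc ht) hsa
      (by rwa [one_add_one_eq_two]) r_nonneg off_circle mem_iff hP
  exact exists_norm_sub_le_mul_of_lie_eq_derivWithin ht hsa
    (contDiff_P.differentiableOn (by simp)) contDiff_B commute lie_B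

/-- Adiabatic theorem with a gap: for a `C²` family of gapped Hermitian operators on
`[0,1]` with `Ḣ(0) = Ḣ(1) = 0`, any solution of `ε ρ̇ = -i[H(s), ρ]`, `ρ(0) = P(0)`,
satisfies `‖ρ(1) - P(1)‖ ≤ C ε` with `C` independent of `ε`. -/
theorem stmt_16 {𝓗 : Type*} [NormedAddCommGroup 𝓗] [InnerProductSpace ℂ 𝓗]
    [FiniteDimensional ℂ 𝓗]
    (a b γ : ℝ) (hab : a ≤ b) (hγ : 0 < γ)
    (H H' H'' P : ℝ → 𝓗 →L[ℂ] 𝓗) (S S' : ℝ → Set ℝ)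
    (hsa : ∀ s ∈ Set.Icc (0:ℝ) 1, IsSelfAdjoint (H s))
    (hHderiv : ∀ s ∈ Set.Icc (0:ℝ) 1, HasDerivWithinAt H (H' s) (Set.Icc 0 1) s)
    (hH'deriv : ∀ s ∈ Set.Icc (0:ℝ) 1, HasDerivWithinAt H' (H'' s) (Set.Icc 0 1) s)
    (hH''cont : ContinuousOn H'' (Set.Icc 0 1))
    (hspec : ∀ s ∈ Set.Icc (0:ℝ) 1, spectrum ℝ (H s) = S s ∪ S' s)
    (hS : ∀ s ∈ Set.Icc (0:ℝ) 1, S s ⊆ Set.Icc a b)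
    (hgap : ∀ s ∈ Set.Icc (0:ℝ) 1, ∀ x ∈ S' s, ∀ y ∈ Set.Icc a b, γ ≤ |x - y|)
    (hP : ∀ s ∈ Set.Icc (0:ℝ) 1, P s = cfc (Set.indicator (S s) fun _ => (1:ℝ)) (H s))
    (hH'0 : H' 0 = 0) (hH'1 : H' 1 = 0) :
    ∃ C : ℝ, ∀ ε ∈ Set.Ioc (0:ℝ) 1, ∀ ρ ρ' : ℝ → 𝓗 →L[ℂ] 𝓗,
      (∀ s ∈ Set.Icc (0:ℝ) 1, HasDerivWithinAt ρ (ρ' s) (Set.Icc 0 1) s) →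
      (∀ s ∈ Set.Icc (0:ℝ) 1, ε • ρ' s = -Complex.I • (H s * ρ s - ρ s * H s)) →
      ρ 0 = P 0 →
      ‖ρ 1 - P 1‖ ≤ C * ε := by
  have : CompleteSpace 𝓗 := FiniteDimensional.complete ℂ 𝓗
  have hH : ContDiffOn ℝ 2 H (Icc 0 1) :=
    contDiffOn_two_of_hasDerivWithinAt (uniqueDiffOn_Icc zero_lt_one) hHderiv hH'deriv hH''cont
  obtain ⟨C, hC⟩ := stmt_16_general zero_lt_one hab hγ hsa hH hspec hS hgap hP
  exact ⟨C, fun ε hε ρ ρ' hρ hode h₀ => hC ε hε.1 ρ ρ' hρ hode h₀ 1 (right_mem_Icc.2 zero_le_one)⟩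
end
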